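/- Let R be a commutative semiring, let M → N be an injective homomorphism of R-modules, and let P be a flat R-module. Then the induced map P ⊗_R M → P ⊗_R N is injective. -/

import Mathlib

/-!
An injective map `f : M → N` has trivial kernel pair: the two projections to `M` from the
equalizer of `f ∘ fst` and `f ∘ snd` on `M × M` coincide. Tensoring with a flat module `P`
preserves this equalizer, and it preserves binary products, so the kernel pair of `P ⊗ f` is
trivial too, which says that `P ⊗ f` is injective. This kernel-pair argument replaces the usual
kernel argument, as over a semiring a map with zero kernel need not be injective.
-/

/-!
Over a commutative semiring, tensoring with a flat module preserves injectivity.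
-/

universe u

open TensorProduct

/-- `M` is flat over the commutative semiring `R`: tensoring with `M` preserves
equalizers (hence all finite limits). -/
def IsSemiflat (R : Type u) [CommSemiring R] (M : Type u) [AddCommMonoid M] [Module R M] : Prop :=
  ∀ (N P : Type u) [AddCommMonoid N] [AddCommMonoid P] [Module R N] [Module R P]
    (f g : N →ₗ[R] P),
    Function.Injective (LinearMap.lTensor M (LinearMap.eqLocus f g).subtype) ∧
    LinearMap.range (LinearMap.lTensor M (LinearMap.eqLocus f g).subtype) =
      LinearMap.eqLocus (LinearMap.lTensor M f) (LinearMap.lTensor M g)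

/-- Tensoring with a flat module over a commutative semiring preserves injections. -/
theorem lTensor_injective_of_isSemiflat (R : Type u) [CommSemiring R]
    (M N P : Type u) [AddCommMonoid M] [AddCommMonoid N] [AddCommMonoid P]
    [Module R M] [Module R N] [Module R P]
    (f : M →ₗ[R] N) (hf : Function.Injective f) (hP : IsSemiflat R P) :
    Function.Injective (LinearMap.lTensor P f) := by
  intro x y hxy
  have hE : LinearMap.fst R M M ∘ₗ
        (LinearMap.eqLocus (f ∘ₗ LinearMap.fst R M M) (f ∘ₗ LinearMap.snd R M M)).subtype =
      LinearMap.snd R M M ∘ₗ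
        (LinearMap.eqLocus (f ∘ₗ LinearMap.fst R M M) (f ∘ₗ LinearMap.snd R M M)).subtype :=
    LinearMap.ext fun e => hf e.2
  -- The element of `P ⊗ (M × M)` corresponding to `(x, y)` in `(P ⊗ M) × (P ⊗ M)`.
  let z := (LinearMap.inl R M M).lTensor P x + (LinearMap.inr R M M).lTensor P y
  have hz₁ : (LinearMap.fst R M M).lTensor P z = x := by
    simp [z, ← LinearMap.lTensor_comp_apply]
  have hz₂ : (LinearMap.snd R M M).lTensor P z = y := by
    simp [z, ← LinearMap.lTensor_comp_apply]
  have hz : z ∈ LinearMap.eqLocus ((f ∘ₗ LinearMap.fst R M M).lTensor P)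
      ((f ∘ₗ LinearMap.snd R M M).lTensor P) := by
    rw [LinearMap.mem_eqLocus, LinearMap.lTensor_comp_apply, LinearMap.lTensor_comp_apply,
      hz₁, hz₂, hxy]
  rw [← (hP _ _ _ _).2] at hz
  obtain ⟨w, hw⟩ := hz
  rw [← hz₁, ← hz₂, ← hw, ← LinearMap.lTensor_comp_apply, hE, LinearMap.lTensor_comp_apply]
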